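/- Let p ∈ (1, ∞), let F : 𝕋 → ℂ be absolutely continuous with Ḟ ∈ L^p(𝕋), and let f = P[F] be its Poisson integral. Then both f_z and the conjugate of f_z̄ belong to the analytic Hardy space H^p(𝔻), and there exists a constant A_p depending only on p such that max(‖f_z‖_p, ‖conj(f_z̄)‖_p) ≤ A_p ‖Ḟ‖_{L^p(𝕋)}. -/

import Mathlib

open MeasureTheory Complex Metric Set Filter
open scoped Real Topology ENNReal

noncomputable section

/-- The Poisson kernel `P(z) = (1-|z|^2)/|1-z|^2`. -/
def poissonKer (z : ℂ) : ℝ := (1 - ‖z‖ ^ 2) / ‖1 - z‖ ^ 2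

/-- The Poisson integral of a boundary function `F` defined on the unit circle. -/
def poissonInt (F : ℂ → ℂ) (z : ℂ) : ℂ :=
  (1 / (2 * π)) * ∫ t in (0:ℝ)..(2 * π),
    (poissonKer (z * Complex.exp (-(t : ℂ) * Complex.I)) : ℂ) *
      F (Complex.exp ((t : ℂ) * Complex.I))

/-- The Poisson integral of a (2π-periodic) function of the angular variable. -/
def poissonIntR (φ : ℝ → ℂ) (z : ℂ) : ℂ :=
  (1 / (2 * π)) * ∫ t in (0:ℝ)..(2 * π),
    (poissonKer (z * Complex.exp (-(t : ℂ) * Complex.I)) : ℂ) * φ t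

/-- The conjugate Poisson kernel `P̃(z) = Im((1+z)/(1-z))`. -/
def conjPoissonKer (z : ℂ) : ℝ := ((1 + z) / (1 - z)).im

/-- The conjugate Poisson integral of a function of the angular variable. -/
def conjPoissonIntR (φ : ℝ → ℂ) (z : ℂ) : ℂ :=
  (1 / (2 * π)) * ∫ t in (0:ℝ)..(2 * π),
    (conjPoissonKer (z * Complex.exp (-(t : ℂ) * Complex.I)) : ℂ) * φ t

/-- Wirtinger derivative `f_z = (1/2)(∂ₓ - i ∂_y) f`. -/
def wdz (f : ℂ → ℂ) (z : ℂ) : ℂ :=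
  (1 / 2) * (fderiv ℝ f z 1 - Complex.I * fderiv ℝ f z Complex.I)

/-- Wirtinger derivative `f_z̄ = (1/2)(∂ₓ + i ∂_y) f`. -/
def wdzb (f : ℂ → ℂ) (z : ℂ) : ℂ :=
  (1 / 2) * (fderiv ℝ f z 1 + Complex.I * fderiv ℝ f z Complex.I)

/-- The angular derivative `f_θ(z) = i (z f_z(z) - z̄ f_z̄(z))`. -/
def fTheta (f : ℂ → ℂ) (z : ℂ) : ℂ :=
  Complex.I * (z * wdz f z - (starRingEnd ℂ) z * wdzb f z)

/-- The radial derivative multiplied by `r`: `r f_r(z) = z f_z(z) + z̄ f_z̄(z)`. -/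
def rFr (f : ℂ → ℂ) (z : ℂ) : ℂ :=
  z * wdz f z + (starRingEnd ℂ) z * wdzb f z

/-- `F : 𝕋 → ℂ` is absolutely continuous with angular derivative `Ḟ = Fd`,
i.e. `t ↦ F(e^{it})` is an indefinite integral of the (locally integrable,
2π-periodic) function `Fd`. -/
def IsACDeriv (F : ℂ → ℂ) (Fd : ℝ → ℂ) : Prop :=
  (∀ a b : ℝ, IntervalIntegrable Fd MeasureTheory.volume a b) ∧
  Function.Periodic Fd (2 * π) ∧
  ∀ t : ℝ, F (Complex.exp ((t : ℂ) * Complex.I)) = F 1 + ∫ s in (0:ℝ)..t, Fd s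

/-- membership in `L^p(𝕋)`, identifying `𝕋` with `[0, 2π)`. -/
def MemLpT (p : ℝ≥0∞) (φ : ℝ → ℂ) : Prop :=
  MeasureTheory.MemLp φ p (MeasureTheory.volume.restrict (Ioc (0:ℝ) (2 * π)))

/-- The integral mean `M_p(r, g)`. -/
def Mp (p : ℝ) (g : ℂ → ℂ) (r : ℝ) : ℝ :=
  ((1 / (2 * π)) * ∫ θ in (0:ℝ)..(2 * π),
      ‖g ((r : ℂ) * Complex.exp ((θ : ℂ) * Complex.I))‖ ^ p) ^ (1 / p)

/-- The `L^p(𝕋)` norm `((1/2π) ∫ |φ|^p)^{1/p}`. -/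
def lpNormT (p : ℝ) (φ : ℝ → ℂ) : ℝ :=
  ((1 / (2 * π)) * ∫ t in (0:ℝ)..(2 * π), ‖φ t‖ ^ p) ^ (1 / p)

/-- Membership in the analytic Hardy space `H^p(𝔻)` for `p ∈ [1, ∞)`. -/
def MemHp (p : ℝ) (g : ℂ → ℂ) : Prop :=
  DifferentiableOn ℂ g (ball (0:ℂ) 1) ∧ ∃ M : ℝ, ∀ r ∈ Ioo (0:ℝ) 1, Mp p g r ≤ M

/-- Membership in `H^∞(𝔻)`: bounded analytic functions on the unit disk. -/
def MemHinf (g : ℂ → ℂ) : Prop :=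
  DifferentiableOn ℂ g (ball (0:ℂ) 1) ∧ ∃ M : ℝ, ∀ z ∈ ball (0:ℂ) 1, ‖g z‖ ≤ M

/-- Harmonicity on the unit disk: `f` is C² with vanishing Laplacian. -/
def HarmonicOnD (f : ℂ → ℂ) : Prop :=
  ContDiffOn ℝ 2 f (ball (0:ℂ) 1) ∧
  ∀ z ∈ ball (0:ℂ) 1,
    fderiv ℝ (fun w => fderiv ℝ f w 1) z 1
      + fderiv ℝ (fun w => fderiv ℝ f w Complex.I) z Complex.I = 0

/-- Membership in the harmonic Hardy space `h^p(𝔻)` for `p ∈ [1, ∞)`. -/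
def Memhp (p : ℝ) (g : ℂ → ℂ) : Prop :=
  HarmonicOnD g ∧ ∃ M : ℝ, ∀ r ∈ Ioo (0:ℝ) 1, Mp p g r ≤ M

/-- Membership in `h^∞(𝔻)`: bounded harmonic functions on the unit disk. -/
def Memhinf (g : ℂ → ℂ) : Prop :=
  HarmonicOnD g ∧ ∃ M : ℝ, ∀ z ∈ ball (0:ℂ) 1, ‖g z‖ ≤ M

/-- `L` is the value of the principal-value Hilbert transform
`(1/2π) p.v. ∫ φ(t)/tan((θ-t)/2) dt` of (the 2π-periodic) `φ` at `θ`. -/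
def IsPVHilbert (φ : ℝ → ℂ) (θ : ℝ) (L : ℂ) : Prop :=
  Filter.Tendsto
    (fun ε : ℝ => (1 / (2 * π)) *
      ∫ t in Ioo (θ - π) (θ + π) \ Ioo (θ - ε) (θ + ε),
        φ t / (Real.tan ((θ - t) / 2) : ℂ))
    (nhdsWithin 0 (Ioi 0)) (nhds L)

/-!
Write `f = P[F]`. Integration by parts in the Poisson integral shows that `f_z` is `-i` times the
Cauchy transform of `t ↦ Ḟ(e^{it}) e^{-it}`; since `conj (f_z̄)` is the `z`-derivative of
`P[conj F]`, the same holds for it with `conj Ḟ`. The theorem is therefore M. Riesz's inequality,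
that the Cauchy transform maps `L^p(𝕋)` boundedly into `H^p(𝔻)` for `1 < p < ∞`.

For `1 < p ≤ 2` and data `φ ≥ 0`, the Cauchy transform `g` of `φ` has values in the right
half-plane, where `|w| ^ p ≤ A (Re w) ^ p - B Re (w ^ p)`. The mean of `Re (g ^ p)` over a circle
centred at `0` is `Re (g(0) ^ p) ≥ 0`, so the `L^p` mean of `g` is controlled by that of `Re g`,
which is the integral of `φ` against a positive kernel all of whose marginals are `1`. Complex data
are combinations of four nonnegative functions, and `p > 2` follows by duality, because the Cauchy
transform restricted to a circle is self-adjoint.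
-/

section LpNorm

variable {α E 𝕜 : Type*} [MeasurableSpace α] {μ : Measure α} [NormedAddCommGroup E] [RCLike 𝕜]
  {p q K : ℝ} {f g : α → 𝕜}

lemma lpNorm_le_lpNorm_of_norm_le {F : Type*} [NormedAddCommGroup F] {p : ℝ≥0∞} {f : α → E}
    {g : α → F} (hg : MemLp g p μ) (h : ∀ x, ‖f x‖ ≤ ‖g x‖) : lpNorm f p μ ≤ lpNorm g p μ :=
  (lpNorm_mono_real hg.norm h).trans_eq (lpNorm_norm hg.aestronglyMeasurable p)

lemma lpNorm_rpow_eq_integral {f : α → E} (hp : 0 < p) (hf : AEStronglyMeasurable f μ) :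
    lpNorm f (ENNReal.ofReal p) μ ^ p = ∫ x, ‖f x‖ ^ p ∂μ := by
  rw [lpNorm_eq_integral_norm_rpow_toReal (by simpa) ENNReal.ofReal_ne_top hf,
    ENNReal.toReal_ofReal hp.le,
    Real.rpow_inv_rpow (integral_nonneg fun x => by positivity) hp.ne']

lemma norm_integral_mul_conj_le_lpNorm_mul_lpNorm (hpq : p.HolderConjugate q)
    (hf : MemLp f (ENNReal.ofReal p) μ) (hg : MemLp g (ENNReal.ofReal q) μ) :
    ‖∫ x, f x * (starRingEnd 𝕜) (g x) ∂μ‖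
      ≤ lpNorm f (ENNReal.ofReal p) μ * lpNorm g (ENNReal.ofReal q) μ := by
  rw [lpNorm_eq_integral_norm_rpow_toReal (by simpa using hpq.pos) ENNReal.ofReal_ne_top hf.1,
    lpNorm_eq_integral_norm_rpow_toReal (by simpa using hpq.symm.pos) ENNReal.ofReal_ne_top hg.1,
    ENNReal.toReal_ofReal hpq.nonneg, ENNReal.toReal_ofReal hpq.symm.nonneg, ← one_div, ← one_div]
  refine (norm_integral_le_integral_norm _).trans ?_
  simpa only [norm_mul, RCLike.norm_conj] using integral_mul_norm_le_Lp_mul_Lq hpq hf hg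

lemma norm_norm_rpow_sub_two_mul (hp : p ≠ 1) (z : 𝕜) :
    ‖((‖z‖ ^ (p - 2) : ℝ) : 𝕜) * z‖ = ‖z‖ ^ (p - 1) := by
  rcases eq_or_ne z 0 with rfl | hz
  · rw [mul_zero, norm_zero, Real.zero_rpow (sub_ne_zero.2 hp)]
  · rw [norm_mul, RCLike.norm_ofReal, abs_of_nonneg (by positivity),
      ← Real.rpow_add_one (norm_ne_zero_iff.2 hz)]
    ring_nf

lemma mul_conj_norm_rpow_sub_two_mul (hp : p ≠ 0) (z : 𝕜) :
    z * (starRingEnd 𝕜) (((‖z‖ ^ (p - 2) : ℝ) : 𝕜) * z) = ((‖z‖ ^ p : ℝ) : 𝕜) := by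
  rcases eq_or_ne z 0 with rfl | hz
  · rw [zero_mul, norm_zero, Real.zero_rpow hp, RCLike.ofReal_zero]
  · have hpow : ‖z‖ ^ p = ‖z‖ ^ (p - 2) * ‖z‖ ^ 2 := by
      rw [← Real.rpow_add_natCast (norm_ne_zero_iff.2 hz), Nat.cast_ofNat, sub_add_cancel]
    rw [map_mul, RCLike.conj_ofReal, mul_left_comm, RCLike.mul_conj, hpow, RCLike.ofReal_mul,
      RCLike.ofReal_pow]

lemma lpNorm_le_of_forall_norm_integral_mul_conj_le (hpq : p.HolderConjugate q) (hK : 0 ≤ K)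
    (hg : MemLp g (ENNReal.ofReal p) μ)
    (hdual : ∀ η : α → 𝕜, MemLp η (ENNReal.ofReal q) μ →
      ‖∫ x, g x * (starRingEnd 𝕜) (η x) ∂μ‖ ≤ K * lpNorm η (ENNReal.ofReal q) μ) :
    lpNorm g (ENNReal.ofReal p) μ ≤ K := by
  set N := lpNorm g (ENNReal.ofReal p) μ
  have hN0 : 0 ≤ N := lpNorm_nonneg
  set η : α → 𝕜 := fun x => ((‖g x‖ ^ (p - 2) : ℝ) : 𝕜) * g x
  have hη (x : α) : ‖η x‖ = ‖g x‖ ^ (p - 1) := norm_norm_rpow_sub_two_mul hpq.lt.ne' (g x)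
  have hη_meas : AEStronglyMeasurable η μ :=
    (RCLike.continuous_ofReal.comp_aestronglyMeasurable
      (hg.1.norm.aemeasurable.pow_const _).aestronglyMeasurable).mul hg.1
  have hη_memLp : MemLp η (ENNReal.ofReal q) μ := by
    have hpow := hg.norm_rpow_div (ENNReal.ofReal (p - 1))
    rw [← ENNReal.ofReal_div_of_pos hpq.sub_one_pos, ← hpq.conjugate_eq,
      ENNReal.toReal_ofReal hpq.sub_one_pos.le] at hpow
    refine hpow.congr_norm hη_meas (Eventually.of_forall fun x => ?_)
    rw [hη, Real.norm_of_nonneg (by positivity)]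
  have hpairing : ∫ x, g x * (starRingEnd 𝕜) (η x) ∂μ = ((N ^ p : ℝ) : 𝕜) := by
    rw [lpNorm_rpow_eq_integral hpq.pos hg.1, ← integral_ofReal]
    exact integral_congr_ae <| Eventually.of_forall fun x =>
      mul_conj_norm_rpow_sub_two_mul hpq.pos.ne' (g x)
  have hη_norm : lpNorm η (ENNReal.ofReal q) μ = N ^ (p - 1) := by
    rw [← Real.rpow_left_inj lpNorm_nonneg (Real.rpow_nonneg hN0 _) hpq.symm.pos.ne',
      lpNorm_rpow_eq_integral hpq.symm.pos hη_meas, ← Real.rpow_mul lpNorm_nonneg,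
      hpq.sub_one_mul_conj, lpNorm_rpow_eq_integral hpq.pos hg.1]
    simp only [hη, ← Real.rpow_mul (norm_nonneg _), hpq.sub_one_mul_conj]
  have hNK : N ^ p ≤ K * N ^ (p - 1) := by
    have := hdual η hη_memLp
    rwa [hpairing, RCLike.norm_ofReal, abs_of_nonneg (Real.rpow_nonneg hN0 _), hη_norm] at this
  rcases hN0.eq_or_lt with hN | hN
  · exact hN ▸ hK
  · rwa [← sub_add_cancel p 1, Real.rpow_add_one hN.ne', mul_comm, sub_add_cancel,
      mul_le_mul_iff_left₀ (Real.rpow_pos_of_pos hN _)] at hNK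

end LpNorm

section Schur

variable {α β : Type*} [MeasurableSpace α] [MeasurableSpace β] {μ : Measure α} {ν : Measure β}
  {p : ℝ}

lemma rpow_lintegral_mul_le_lintegral_mul_rpow {k f : β → ℝ≥0∞} (hp : 1 ≤ p)
    (hk : Measurable k) (hk1 : ∫⁻ y, k y ∂ν ≤ 1) (hf : AEMeasurable f ν) :
    (∫⁻ y, k y * f y ∂ν) ^ p ≤ ∫⁻ y, k y * f y ^ p ∂ν := by
  have hp0 : 0 < p := zero_lt_one.trans_le hp
  have hJensen : ∫⁻ y, f y ∂ν.withDensity k ≤ (∫⁻ y, f y ^ p ∂ν.withDensity k) ^ (1 / p) := by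
    have hfk : AEStronglyMeasurable f (ν.withDensity k) :=
      (hf.mono_ac (withDensity_absolutelyContinuous ν k)).aestronglyMeasurable
    have hcomp := eLpNorm'_le_eLpNorm'_mul_rpow_measure_univ zero_lt_one hp hfk
    simp only [eLpNorm', enorm_eq_self, ENNReal.rpow_one, div_one] at hcomp
    refine hcomp.trans (mul_le_of_le_one_right' (ENNReal.rpow_le_one ?_ ?_))
    · rwa [withDensity_apply _ MeasurableSet.univ, setLIntegral_univ]
    · exact sub_nonneg.2 (div_le_one_of_le₀ hp hp0.le)
  rw [lintegral_withDensity_eq_lintegral_mul₀ hk.aemeasurable hf,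
    lintegral_withDensity_eq_lintegral_mul₀ hk.aemeasurable (hf.pow_const p), one_div] at hJensen
  exact (ENNReal.le_rpow_inv_iff hp0).1 hJensen

lemma lintegral_rpow_lintegral_mul_le [SFinite μ] [SFinite ν] {K : α → β → ℝ≥0∞} {f : β → ℝ≥0∞}
    (hp : 1 ≤ p) (hK : Measurable (Function.uncurry K)) (hrow : ∀ x, ∫⁻ y, K x y ∂ν ≤ 1)
    (hcol : ∀ y, ∫⁻ x, K x y ∂μ ≤ 1) (hf : AEMeasurable f ν) :
    ∫⁻ x, (∫⁻ y, K x y * f y ∂ν) ^ p ∂μ ≤ ∫⁻ y, f y ^ p ∂ν :=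
  calc ∫⁻ x, (∫⁻ y, K x y * f y ∂ν) ^ p ∂μ
      ≤ ∫⁻ x, ∫⁻ y, K x y * f y ^ p ∂ν ∂μ := lintegral_mono fun x =>
        rpow_lintegral_mul_le_lintegral_mul_rpow hp hK.of_uncurry_left (hrow x) hf
    _ = ∫⁻ y, ∫⁻ x, K x y * f y ^ p ∂μ ∂ν :=
        lintegral_lintegral_swap (hK.aemeasurable.mul (hf.pow_const p).comp_snd)
    _ = ∫⁻ y, (∫⁻ x, K x y ∂μ) * f y ^ p ∂ν :=
        lintegral_congr fun _ => lintegral_mul_const _ hK.of_uncurry_right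
    _ ≤ ∫⁻ y, f y ^ p ∂ν := lintegral_mono fun _ => mul_le_of_le_one_left' (hcol _)

end Schur

section IntegrationByParts

variable {𝕜 : Type*} [RCLike 𝕜] {f h h' : ℝ → 𝕜} {a b : ℝ}

lemma integral_primitive_mul_eq_integral_mul_tail (hab : a ≤ b)
    (hf : IntervalIntegrable f volume a b) (hh' : IntervalIntegrable h' volume a b) :
    ∫ t in a..b, (∫ s in a..t, f s) * h' t = ∫ s in a..b, f s * ∫ t in s..b, h' t := by
  set μ : Measure ℝ := volume.restrict (Ioc a b)
  rw [intervalIntegrable_iff_integrableOn_Ioc_of_le hab] at hf hh'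
  set T : Set (ℝ × ℝ) := {x | x.2 ≤ x.1}
  set G : ℝ × ℝ → 𝕜 := T.indicator fun x => f x.2 * h' x.1
  have hG : Integrable G (μ.prod μ) := by
    refine Integrable.indicator ?_ (measurableSet_le measurable_snd measurable_fst)
    simpa only [mul_comm] using hh'.mul_prod hf
  have hleft : ∀ t ∈ Ioc a b, (∫ s in a..t, f s) * h' t = ∫ s, G (t, s) ∂μ := fun t ht => by
    have hsec : (fun s => G (t, s)) = (Iic t).indicator fun s => f s * h' t := rfl
    rw [hsec, integral_indicator measurableSet_Iic, Measure.restrict_restrict measurableSet_Iic,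
      inter_comm, Ioc_inter_Iic, min_eq_right ht.2, integral_mul_const,
      intervalIntegral.integral_of_le ht.1.le]
  have hright : ∀ s ∈ Ioc a b, f s * ∫ t in s..b, h' t = ∫ t, G (t, s) ∂μ := fun s hs => by
    have hsec : (fun t => G (t, s)) = (Ici s).indicator fun t => f s * h' t := rfl
    have hset : Ici s ∩ Ioc a b = Icc s b := by
      ext t
      exact ⟨fun ht => ⟨ht.1, ht.2.2⟩, fun ht => ⟨ht.1, hs.1.trans_le ht.1, ht.2⟩⟩
    rw [hsec, integral_indicator measurableSet_Ici, Measure.restrict_restrict measurableSet_Ici,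
      hset, integral_const_mul, integral_Icc_eq_integral_Ioc,
      intervalIntegral.integral_of_le hs.2]
  rw [intervalIntegral.integral_of_le hab, intervalIntegral.integral_of_le hab,
    setIntegral_congr_fun measurableSet_Ioc hleft, setIntegral_congr_fun measurableSet_Ioc hright]
  exact integral_integral_swap hG

lemma integral_primitive_mul_deriv (hab : a ≤ b) (hf : IntervalIntegrable f volume a b)
    (hh : ∀ t ∈ uIcc a b, HasDerivAt h (h' t) t) (hh' : IntervalIntegrable h' volume a b) :
    ∫ t in a..b, (∫ s in a..t, f s) * h' t
      = (∫ s in a..b, f s) * h b - ∫ s in a..b, f s * h s := by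
  have hcont : ContinuousOn h (uIcc a b) := fun t ht => (hh t ht).continuousAt.continuousWithinAt
  rw [integral_primitive_mul_eq_integral_mul_tail hab hf hh', ← intervalIntegral.integral_mul_const,
    ← intervalIntegral.integral_sub (hf.mul_const _) (hf.mul_continuousOn hcont)]
  refine intervalIntegral.integral_congr fun s hs => ?_
  have hsub : uIcc s b ⊆ uIcc a b := uIcc_subset_uIcc_right hs
  rw [intervalIntegral.integral_eq_sub_of_hasDerivAt (fun t ht => hh t (hsub ht))
    (hh'.mono_set hsub), mul_sub]

end IntegrationByParts

section PowerInequality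

variable {p : ℝ}

lemma exists_one_le_mul_cos_rpow_sub_mul_cos (hp : 1 < p) (hp2 : p ≤ 2) :
    ∃ A B : ℝ, 0 < A ∧ 0 < B ∧ ∀ θ : ℝ, |θ| < π / 2 →
      1 ≤ A * Real.cos θ ^ p - B * Real.cos (p * θ) := by
  -- On `[α, π / 2)`, where `p α` is the midpoint of `[π / 2, p π / 2]`, the function
  -- `θ ↦ cos (p θ)` is at most `-c < 0`; on `[0, α]` the function `cos` is at least `d > 0`.
  set α : ℝ := π * (1 + p) / (4 * p)
  have hpα : p * α = π * (1 + p) / 4 := by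
    simp only [α]
    field_simp
  have hα0 : 0 < α := by positivity
  have hα : α < π / 2 := by nlinarith [Real.pi_pos]
  obtain ⟨c, hc⟩ : ∃ c, c = -Real.cos (p * α) := ⟨_, rfl⟩
  obtain ⟨d, hd⟩ : ∃ d, d = Real.cos α := ⟨_, rfl⟩
  have hc0 : 0 < c := hc ▸ neg_pos.2 (Real.cos_neg_of_pi_div_two_lt_of_lt
    (by nlinarith [Real.pi_pos]) (by nlinarith [Real.pi_pos]))
  have hd0 : 0 < d := hd ▸ Real.cos_pos_of_mem_Ioo ⟨by linarith, hα⟩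
  refine ⟨(1 + 1 / c) / d ^ p, 1 / c, by positivity, by positivity, fun θ hθ => ?_⟩
  rw [← Real.cos_abs θ, ← Real.cos_abs (p * θ), abs_mul, abs_of_pos (zero_lt_one.trans hp)]
  have hcos0 : 0 ≤ Real.cos |θ| := Real.cos_nonneg_of_mem_Icc
    ⟨by linarith [abs_nonneg θ, Real.pi_pos], hθ.le⟩
  rcases le_total α |θ| with hαθ | hαθ
  · have hneg : Real.cos (p * |θ|) ≤ -c := by
      rw [hc, neg_neg]
      exact Real.cos_le_cos_of_nonneg_of_le_pi (by positivity) (by nlinarith) (by gcongr)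
    calc 1 = 0 - 1 / c * (-c) := by field_simp; ring
      _ ≤ _ := sub_le_sub (by positivity) (by gcongr)
  · have hpos : d ≤ Real.cos |θ| := by
      rw [hd]
      exact Real.cos_le_cos_of_nonneg_of_le_pi (abs_nonneg _) (by linarith [Real.pi_pos]) hαθ
    calc 1 = (1 + 1 / c) / d ^ p * d ^ p - 1 / c * 1 := by field_simp; ring
      _ ≤ _ := sub_le_sub (by gcongr) (by gcongr; exact Real.cos_le_one _)

lemma exists_norm_rpow_le_mul_re_rpow_sub (hp : 1 < p) (hp2 : p ≤ 2) :
    ∃ A B : ℝ, 0 < A ∧ 0 < B ∧ ∀ z : ℂ, 0 < z.re →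
      ‖z‖ ^ p ≤ A * z.re ^ p - B * (z ^ (p : ℂ)).re := by
  obtain ⟨A, B, hA, hB, hcos⟩ := exists_one_le_mul_cos_rpow_sub_mul_cos hp hp2
  refine ⟨A, B, hA, hB, fun z hz => ?_⟩
  have harg : |z.arg| < π / 2 := Complex.abs_arg_lt_pi_div_two_iff.2 (.inl hz)
  have hcos0 : 0 ≤ Real.cos z.arg := Real.cos_nonneg_of_mem_Icc (abs_le.1 harg.le)
  calc ‖z‖ ^ p ≤ ‖z‖ ^ p * (A * Real.cos z.arg ^ p - B * Real.cos (p * z.arg)) :=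
        le_mul_of_one_le_right (by positivity) (hcos z.arg harg)
    _ = A * (‖z‖ * Real.cos z.arg) ^ p - B * (‖z‖ ^ p * Real.cos (p * z.arg)) := by
        rw [Real.mul_rpow (norm_nonneg z) hcos0]
        ring
    _ = A * z.re ^ p - B * (z ^ (p : ℂ)).re := by
        rw [Complex.norm_mul_cos_arg, Complex.cpow_ofReal_re, mul_comm p]

lemma circleAverage_re_cpow_nonneg {g : ℂ → ℂ} {c : ℂ} {R : ℝ}
    (hg : DifferentiableOn ℂ g (closedBall c |R|)) (hpos : ∀ z ∈ closedBall c |R|, 0 < (g z).re)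
    (him : (g c).im = 0) : 0 ≤ Real.circleAverage (fun z => (g z ^ (p : ℂ)).re) c R := by
  have hgp : DifferentiableOn ℂ (fun z => g z ^ (p : ℂ)) (closedBall c |R|) :=
    hg.cpow (differentiableOn_const _) fun z hz => .inl (hpos z hz)
  have hmean : Real.circleAverage (fun z => (g z ^ (p : ℂ)).re) c R = (g c ^ (p : ℂ)).re := by
    rw [← (hgp.mono closure_ball_subset_closedBall).diffContOnCl.circleAverage]
    exact Complex.reCLM.circleAverage_comp_comm
      (hgp.continuousOn.mono sphere_subset_closedBall).circleIntegrable'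
  have hreal : g c = ((g c).re : ℂ) := Complex.ext rfl him
  have hre : 0 ≤ (g c).re := (hpos c (mem_closedBall_self (abs_nonneg R))).le
  rw [hmean, hreal, ← Complex.ofReal_cpow hre, Complex.ofReal_re]
  exact Real.rpow_nonneg hre p

lemma exists_circleAverage_norm_rpow_le (hp : 1 < p) (hp2 : p ≤ 2) :
    ∃ A : ℝ, 0 < A ∧ ∀ (g : ℂ → ℂ) (c : ℂ) (R : ℝ), DifferentiableOn ℂ g (closedBall c |R|) →
      (∀ z ∈ closedBall c |R|, 0 < (g z).re) → (g c).im = 0 →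
      Real.circleAverage (fun z => ‖g z‖ ^ p) c R
        ≤ A * Real.circleAverage (fun z => (g z).re ^ p) c R := by
  obtain ⟨A, B, hA, hB, hpow⟩ := exists_norm_rpow_le_mul_re_rpow_sub hp hp2
  refine ⟨A, hA, fun g c R hg hpos him => ?_⟩
  have hp0 : 0 ≤ p := (zero_lt_one.trans hp).le
  have hcont : ContinuousOn g (sphere c |R|) := hg.continuousOn.mono sphere_subset_closedBall
  have hnorm : CircleIntegrable (fun z => ‖g z‖ ^ p) c R :=
    (hcont.norm.rpow_const fun _ _ => .inr hp0).circleIntegrable'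
  have hre : CircleIntegrable (fun z => (g z).re ^ p) c R :=
    ((Complex.continuous_re.comp_continuousOn hcont).rpow_const
      fun _ _ => .inr hp0).circleIntegrable'
  have hrepow : CircleIntegrable (fun z => (g z ^ (p : ℂ)).re) c R :=
    (Complex.continuous_re.comp_continuousOn <| hcont.cpow continuousOn_const
      fun z hz => .inl (hpos z (sphere_subset_closedBall hz))).circleIntegrable'
  calc Real.circleAverage (fun z => ‖g z‖ ^ p) c R
      ≤ Real.circleAverage
          ((A • fun z => (g z).re ^ p) - B • fun z => (g z ^ (p : ℂ)).re) c R :=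
        Real.circleAverage_mono hnorm (hre.const_smul.sub hrepow.const_smul) fun z hz =>
          hpow _ (hpos z (sphere_subset_closedBall hz))
    _ = A * Real.circleAverage (fun z => (g z).re ^ p) c R
          - B * Real.circleAverage (fun z => (g z ^ (p : ℂ)).re) c R := by
        rw [Real.circleAverage_sub hre.const_smul hrepow.const_smul, Real.circleAverage_smul,
          Real.circleAverage_smul, smul_eq_mul, smul_eq_mul]
    _ ≤ A * Real.circleAverage (fun z => (g z).re ^ p) c R :=
        sub_le_self _ (mul_nonneg hB.le (circleAverage_re_cpow_nonneg hg hpos him))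

end PowerInequality

/-- Normalized Lebesgue measure on `(0, 2π]`, the angular model of the Haar probability measure
of the unit circle; all `L^p` norms and circle means below are taken with respect to it. -/
def angleMeasure : Measure ℝ := ENNReal.ofReal (2 * π)⁻¹ • volume.restrict (Ioc 0 (2 * π))

section AngleMeasure

variable {E : Type*} [NormedAddCommGroup E] {f : ℝ → E}

instance : IsProbabilityMeasure angleMeasure where
  measure_univ := by
    rw [angleMeasure, Measure.smul_apply, Measure.restrict_apply_univ, Real.volume_Ioc, sub_zero,
      smul_eq_mul, ← ENNReal.ofReal_mul (by positivity), inv_mul_cancel₀ Real.two_pi_pos.ne',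
      ENNReal.ofReal_one]

lemma integrable_angleMeasure_iff :
    Integrable f angleMeasure ↔ IntegrableOn f (Ioc 0 (2 * π)) :=
  integrable_smul_measure (by simp [Real.pi_pos]) ENNReal.ofReal_ne_top

lemma intervalIntegrable_zero_two_pi_iff :
    IntervalIntegrable f volume 0 (2 * π) ↔ Integrable f angleMeasure := by
  rw [intervalIntegrable_iff_integrableOn_Ioc_of_le Real.two_pi_pos.le, integrable_angleMeasure_iff]

lemma integral_angleMeasure [NormedSpace ℝ E] (f : ℝ → E) :
    ∫ t, f t ∂angleMeasure = (2 * π)⁻¹ • ∫ t in (0 : ℝ)..2 * π, f t := by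
  rw [angleMeasure, integral_smul_measure, intervalIntegral.integral_of_le Real.two_pi_pos.le,
    ENNReal.toReal_ofReal (by positivity)]

lemma integral_comp_circleMap [NormedSpace ℝ E] (g : ℂ → E) (r : ℝ) :
    ∫ θ, g (circleMap 0 r θ) ∂angleMeasure = Real.circleAverage g 0 r :=
  integral_angleMeasure _

lemma MemLpT.memLp_angleMeasure {p : ℝ≥0∞} {φ : ℝ → ℂ} (hφ : MemLpT p φ) :
    MemLp φ p angleMeasure :=
  hφ.smul_measure ENNReal.ofReal_ne_top

lemma memLp_angleMeasure_of_continuous (hf : Continuous f) (p : ℝ≥0∞) :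
    MemLp f p angleMeasure := by
  obtain ⟨C, hC⟩ := isCompact_Icc.exists_bound_of_continuousOn (s := Icc 0 (2 * π)) hf.continuousOn
  refine MemLp.smul_measure ?_ ENNReal.ofReal_ne_top
  exact .of_bound hf.aestronglyMeasurable C <|
    ae_restrict_of_forall_mem measurableSet_Ioc fun t ht => hC t (Ioc_subset_Icc_self ht)

lemma lpNormT_eq_lpNorm {p : ℝ} (hp : 0 < p) {φ : ℝ → ℂ}
    (hφ : AEStronglyMeasurable φ angleMeasure) :
    lpNormT p φ = lpNorm φ (ENNReal.ofReal p) angleMeasure := by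
  rw [lpNorm_eq_integral_norm_rpow_toReal (by simpa) ENNReal.ofReal_ne_top hφ,
    ENNReal.toReal_ofReal hp.le, integral_angleMeasure, lpNormT, one_div, one_div, smul_eq_mul]

lemma Mp_eq_lpNormT (p : ℝ) (g : ℂ → ℂ) (r : ℝ) :
    Mp p g r = lpNormT p fun θ => g (circleMap 0 r θ) := by
  simp only [Mp, lpNormT, circleMap_zero]

end AngleMeasure

/-- The kernel `1 / (1 - z e^{-it})` of the Cauchy transform. -/
def cauchyKer (z : ℂ) (t : ℝ) : ℂ := (1 - z * Complex.exp (-(t : ℂ) * Complex.I))⁻¹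

lemma norm_exp_neg_ofReal_mul_I (t : ℝ) : ‖Complex.exp (-(t : ℂ) * Complex.I)‖ = 1 := by
  simpa using Complex.norm_exp_ofReal_mul_I (-t)

section CauchyKernel

variable {z : ℂ} {r : ℝ}

lemma one_sub_norm_le_norm_one_sub_mul_exp (z : ℂ) (t : ℝ) :
    1 - ‖z‖ ≤ ‖1 - z * Complex.exp (-(t : ℂ) * Complex.I)‖ := by
  simpa only [norm_one, norm_mul, norm_exp_neg_ofReal_mul_I, mul_one] using
    norm_sub_norm_le 1 (z * Complex.exp (-(t : ℂ) * Complex.I))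

lemma one_sub_mul_exp_ne_zero (hz : ‖z‖ < 1) (t : ℝ) :
    1 - z * Complex.exp (-(t : ℂ) * Complex.I) ≠ 0 :=
  norm_pos_iff.1 <| (sub_pos.2 hz).trans_le (one_sub_norm_le_norm_one_sub_mul_exp z t)

lemma norm_cauchyKer_le (hr : r < 1) (hz : ‖z‖ ≤ r) (t : ℝ) : ‖cauchyKer z t‖ ≤ (1 - r)⁻¹ := by
  rw [cauchyKer, norm_inv]
  exact inv_anti₀ (sub_pos.2 hr) <|
    (sub_le_sub_left hz 1).trans (one_sub_norm_le_norm_one_sub_mul_exp z t)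

lemma continuous_cauchyKer (hz : ‖z‖ < 1) : Continuous (cauchyKer z) :=
  Continuous.inv₀ (by fun_prop) (one_sub_mul_exp_ne_zero hz)

lemma hasDerivAt_cauchyKer_left (hz : ‖z‖ < 1) (t : ℝ) :
    HasDerivAt (fun w => cauchyKer w t)
      (Complex.exp (-(t : ℂ) * Complex.I) * cauchyKer z t ^ 2) z := by
  refine ((((hasDerivAt_id z).mul_const _).const_sub 1).inv
    (one_sub_mul_exp_ne_zero hz t)).congr_deriv ?_
  simp only [cauchyKer, id, one_mul, neg_neg, inv_pow, div_eq_mul_inv]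

lemma hasDerivAt_exp_mul_cauchyKer (hz : ‖z‖ < 1) (t : ℝ) :
    HasDerivAt (fun s : ℝ => Complex.exp (-(s : ℂ) * Complex.I) * cauchyKer z s)
      (-Complex.I * (Complex.exp (-(t : ℂ) * Complex.I) * cauchyKer z t ^ 2)) t := by
  have hexp : HasDerivAt (fun s : ℝ => Complex.exp (-(s : ℂ) * Complex.I))
      (-Complex.I * Complex.exp (-(t : ℂ) * Complex.I)) t :=
    (Complex.ofRealCLM.hasDerivAt.neg.mul_const Complex.I).cexp.congr_deriv (by simp [mul_comm])
  have hne := one_sub_mul_exp_ne_zero hz t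
  refine (hexp.mul (((hexp.const_mul z).const_sub 1).inv hne)).congr_deriv ?_
  simp only [cauchyKer, Pi.inv_apply]
  field_simp
  ring

lemma norm_circleMap_zero_lt_one (hr : |r| < 1) (θ : ℝ) : ‖circleMap 0 r θ‖ < 1 := by
  rwa [norm_circleMap_zero]

lemma continuous_comp_circleMap {E : Type*} [TopologicalSpace E] {g : ℂ → E}
    (hg : ContinuousOn g (ball 0 1)) (hr : |r| < 1) : Continuous fun θ => g (circleMap 0 r θ) :=
  hg.comp_continuous (continuous_circleMap 0 r)
    fun θ => mem_ball_zero_iff.2 (norm_circleMap_zero_lt_one hr θ)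

lemma continuous_cauchyKer_circleMap (hr : |r| < 1) :
    Continuous fun x : ℝ × ℝ => cauchyKer (circleMap 0 r x.1) x.2 :=
  Continuous.inv₀ (by fun_prop)
    fun x => one_sub_mul_exp_ne_zero (norm_circleMap_zero_lt_one hr x.1) x.2

lemma conj_cauchyKer_circleMap (r θ t : ℝ) :
    (starRingEnd ℂ) (cauchyKer (circleMap 0 r θ) t) = cauchyKer (circleMap 0 r t) θ := by
  simp only [cauchyKer, circleMap_zero, map_inv₀, map_sub, map_one, map_mul, Complex.conj_ofReal,
    ← Complex.exp_conj, map_neg, Complex.conj_I]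
  congr 2
  ring_nf

lemma integral_cauchyKer_circleMap_left (hr : |r| < 1) (t : ℝ) :
    ∫ θ, cauchyKer (circleMap 0 r θ) t ∂angleMeasure = 1 := by
  have hd : DiffContOnCl ℂ (fun z => cauchyKer z t) (ball 0 |r|) :=
    DifferentiableOn.diffContOnCl fun z hz =>
      (hasDerivAt_cauchyKer_left ((mem_closedBall_zero_iff.1
        (closure_ball_subset_closedBall hz)).trans_lt hr) t).differentiableAt.differentiableWithinAt
  rw [integral_comp_circleMap fun z => cauchyKer z t, hd.circleAverage]
  simp [cauchyKer]

end CauchyKernel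

lemma poissonKer_eq_inv_add_conj_inv_sub_one {w : ℂ} (hw : w ≠ 1) :
    (poissonKer w : ℂ) = (1 - w)⁻¹ + (starRingEnd ℂ) (1 - w)⁻¹ - 1 := by
  have hne : 1 - w ≠ 0 := sub_ne_zero.2 hw.symm
  have hne' : (starRingEnd ℂ) (1 - w) ≠ 0 := (map_ne_zero _).2 hne
  rw [poissonKer]
  push_cast
  rw [← Complex.mul_conj' w, ← Complex.mul_conj' (1 - w), map_inv₀]
  field_simp
  simp only [map_sub, map_one]
  ring

lemma poissonKer_nonneg {w : ℂ} (hw : ‖w‖ ≤ 1) : 0 ≤ poissonKer w :=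
  div_nonneg (sub_nonneg.2 (pow_le_one₀ (norm_nonneg w) hw)) (by positivity)

section CauchyKernelPositivity

variable {z : ℂ}

lemma poissonKer_mul_exp (hz : ‖z‖ < 1) (t : ℝ) :
    (poissonKer (z * Complex.exp (-(t : ℂ) * Complex.I)) : ℂ) =
      cauchyKer z t + (starRingEnd ℂ) (cauchyKer z t) - 1 :=
  poissonKer_eq_inv_add_conj_inv_sub_one fun h => one_sub_mul_exp_ne_zero hz t (by rw [h, sub_self])

lemma one_half_le_re_cauchyKer (hz : ‖z‖ < 1) (t : ℝ) : 1 / 2 ≤ (cauchyKer z t).re := by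
  have hP := congrArg Complex.re (poissonKer_mul_exp hz t)
  have hP0 : 0 ≤ poissonKer (z * Complex.exp (-(t : ℂ) * Complex.I)) :=
    poissonKer_nonneg (by simpa only [norm_mul, norm_exp_neg_ofReal_mul_I, mul_one] using hz.le)
  rw [Complex.ofReal_re, Complex.sub_re, Complex.add_re, Complex.conj_re, Complex.one_re] at hP
  linarith

lemma re_cauchyKer_nonneg (hz : ‖z‖ < 1) (t : ℝ) : 0 ≤ (cauchyKer z t).re :=
  one_half_pos.le.trans (one_half_le_re_cauchyKer hz t)

end CauchyKernelPositivity

/-- The Cauchy transform `z ↦ (1/2π) ∫ φ(t) / (1 - z e^{-it}) dt` of a function `φ` of the angular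
variable: the analytic function on the unit disk whose Taylor coefficients are the Fourier
coefficients of `φ` of nonnegative index. -/
def cauchyTransform (φ : ℝ → ℂ) (z : ℂ) : ℂ := ∫ t, φ t * cauchyKer z t ∂angleMeasure

section CauchyTransform

variable {φ ψ : ℝ → ℂ} {z : ℂ} {r : ℝ}

lemma integrable_mul_cauchyKer (hφ : Integrable φ angleMeasure) (hz : ‖z‖ < 1) :
    Integrable (fun t => φ t * cauchyKer z t) angleMeasure :=
  hφ.mul_bdd (continuous_cauchyKer hz).aestronglyMeasurable <|
    Eventually.of_forall (norm_cauchyKer_le hz le_rfl)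

lemma hasDerivAt_cauchyTransform (hφ : Integrable φ angleMeasure) (hz : ‖z‖ < 1) :
    HasDerivAt (cauchyTransform φ)
      (∫ t, φ t * (Complex.exp (-(t : ℂ) * Complex.I) * cauchyKer z t ^ 2) ∂angleMeasure) z := by
  obtain ⟨ρ, hzρ, hρ⟩ := exists_between hz
  refine (hasDerivAt_integral_of_dominated_loc_of_deriv_le
    (F := fun w t => φ t * cauchyKer w t)
    (F' := fun w t => φ t * (Complex.exp (-(t : ℂ) * Complex.I) * cauchyKer w t ^ 2))
    (bound := fun t => ‖φ t‖ * (1 - ρ)⁻¹ ^ 2)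
    (isOpen_ball.mem_nhds (mem_ball_zero_iff.2 hzρ)) ?_ (integrable_mul_cauchyKer hφ hz) ?_
    (Eventually.of_forall fun t w hw => ?_) (hφ.norm.mul_const _)
    (Eventually.of_forall fun t w hw => ?_)).2
  · filter_upwards [isOpen_ball.mem_nhds (mem_ball_zero_iff.2 hz)] with w hw
    exact (integrable_mul_cauchyKer hφ (mem_ball_zero_iff.1 hw)).aestronglyMeasurable
  · refine hφ.aestronglyMeasurable.mul (Continuous.aestronglyMeasurable ?_)
    exact Continuous.mul (by fun_prop) ((continuous_cauchyKer hz).pow 2)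
  · rw [norm_mul, norm_mul, norm_exp_neg_ofReal_mul_I, one_mul, norm_pow]
    gcongr
    exact norm_cauchyKer_le hρ (mem_ball_zero_iff.1 hw).le t
  · exact (hasDerivAt_cauchyKer_left ((mem_ball_zero_iff.1 hw).trans hρ) t).const_mul (φ t)

lemma differentiableOn_cauchyTransform (hφ : Integrable φ angleMeasure) :
    DifferentiableOn ℂ (cauchyTransform φ) (ball 0 1) := fun _ hz =>
  (hasDerivAt_cauchyTransform hφ (mem_ball_zero_iff.1 hz)).differentiableAt.differentiableWithinAt

lemma memLp_cauchyTransform_circleMap (hφ : Integrable φ angleMeasure) (hr : |r| < 1) (p : ℝ≥0∞) :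
    MemLp (fun θ => cauchyTransform φ (circleMap 0 r θ)) p angleMeasure :=
  memLp_angleMeasure_of_continuous
    (continuous_comp_circleMap (differentiableOn_cauchyTransform hφ).continuousOn hr) p

lemma cauchyTransform_add (hφ : Integrable φ angleMeasure) (hψ : Integrable ψ angleMeasure)
    (hz : ‖z‖ < 1) :
    cauchyTransform (fun t => φ t + ψ t) z = cauchyTransform φ z + cauchyTransform ψ z := by
  simp only [cauchyTransform, add_mul]
  exact integral_add (integrable_mul_cauchyKer hφ hz) (integrable_mul_cauchyKer hψ hz)

lemma cauchyTransform_const_mul (c : ℂ) (φ : ℝ → ℂ) (z : ℂ) :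
    cauchyTransform (fun t => c * φ t) z = c * cauchyTransform φ z := by
  simp only [cauchyTransform, mul_assoc, integral_const_mul]

lemma re_cauchyTransform_ofReal {φ : ℝ → ℝ} (hφ : Integrable φ angleMeasure) (hz : ‖z‖ < 1) :
    (cauchyTransform (fun t => (φ t : ℂ)) z).re
      = ∫ t, φ t * (cauchyKer z t).re ∂angleMeasure := by
  have hre := integral_re (integrable_mul_cauchyKer hφ.ofReal hz)
  simp only [RCLike.re_eq_complex_re, Complex.coe_algebraMap, Complex.re_ofReal_mul] at hre
  exact hre.symm

lemma integral_mul_conj_cauchyTransform (hφ : Integrable φ angleMeasure)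
    (hψ : Integrable ψ angleMeasure) (hr : |r| < 1) :
    ∫ θ, cauchyTransform φ (circleMap 0 r θ) * (starRingEnd ℂ) (ψ θ) ∂angleMeasure
      = ∫ t, φ t * (starRingEnd ℂ) (cauchyTransform ψ (circleMap 0 r t)) ∂angleMeasure := by
  simp only [cauchyTransform, ← integral_conj, ← integral_mul_const, ← integral_const_mul, map_mul,
    conj_cauchyKer_circleMap]
  rw [integral_integral_swap]
  · simp only [mul_assoc, mul_comm]
  · have hprod : Integrable (fun x : ℝ × ℝ => (starRingEnd ℂ) (ψ x.1) * φ x.2)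
        (angleMeasure.prod angleMeasure) :=
      (Complex.conjCLE.toContinuousLinearMap.integrable_comp hψ).mul_prod hφ
    refine (hprod.mul_bdd (continuous_cauchyKer_circleMap hr).aestronglyMeasurable
      (Eventually.of_forall fun x => norm_cauchyKer_le hr (norm_circleMap_zero r x.1).le x.2)).congr
      (Eventually.of_forall fun x => ?_)
    simp only [Function.uncurry]
    ring

end CauchyTransform

section RealPart

variable {p r : ℝ}

lemma lintegral_re_cauchyKer_circleMap_left (hr : |r| < 1) (t : ℝ) :
    ∫⁻ θ, ENNReal.ofReal (cauchyKer (circleMap 0 r θ) t).re ∂angleMeasure = 1 := by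
  have hcont : Continuous fun θ => cauchyKer (circleMap 0 r θ) t :=
    continuous_comp_circleMap (g := fun z => cauchyKer z t) (fun z hz =>
      (hasDerivAt_cauchyKer_left (mem_ball_zero_iff.1 hz) t).continuousAt.continuousWithinAt) hr
  have hint : Integrable (fun θ => cauchyKer (circleMap 0 r θ) t) angleMeasure :=
    (memLp_angleMeasure_of_continuous hcont 1).integrable le_rfl
  have hre : ∫ θ, (cauchyKer (circleMap 0 r θ) t).re ∂angleMeasure = 1 := by
    rw [← Complex.one_re, ← integral_cauchyKer_circleMap_left hr t]
    exact Complex.reCLM.integral_comp_comm hint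
  have hint_re : Integrable (fun θ => (cauchyKer (circleMap 0 r θ) t).re) angleMeasure :=
    Complex.reCLM.integrable_comp hint
  rw [← ofReal_integral_eq_lintegral_ofReal hint_re (Eventually.of_forall fun θ =>
    re_cauchyKer_nonneg (norm_circleMap_zero_lt_one hr θ) t), hre, ENNReal.ofReal_one]

lemma lintegral_re_cauchyKer_circleMap_right (hr : |r| < 1) (θ : ℝ) :
    ∫⁻ t, ENNReal.ofReal (cauchyKer (circleMap 0 r θ) t).re ∂angleMeasure = 1 := by
  simp only [← conj_cauchyKer_circleMap r _ θ, Complex.conj_re]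
  exact lintegral_re_cauchyKer_circleMap_left hr θ

lemma eLpNorm_re_cauchyTransform_circleMap_le (hp : 1 ≤ p) (hr : |r| < 1) {φ : ℝ → ℝ}
    (hφ : Integrable φ angleMeasure) :
    eLpNorm (fun θ => (cauchyTransform (fun t => (φ t : ℂ)) (circleMap 0 r θ)).re)
        (ENNReal.ofReal p) angleMeasure
      ≤ eLpNorm φ (ENNReal.ofReal p) angleMeasure := by
  have hp0 : 0 < p := zero_lt_one.trans_le hp
  have hbound (θ : ℝ) : ‖(cauchyTransform (fun t => (φ t : ℂ)) (circleMap 0 r θ)).re‖ₑ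
      ≤ ∫⁻ t, ENNReal.ofReal (cauchyKer (circleMap 0 r θ) t).re * ‖φ t‖ₑ ∂angleMeasure := by
    rw [re_cauchyTransform_ofReal hφ (norm_circleMap_zero_lt_one hr θ)]
    refine (enorm_integral_le_lintegral_enorm _).trans_eq (lintegral_congr fun t => ?_)
    rw [enorm_mul, mul_comm,
      Real.enorm_of_nonneg (re_cauchyKer_nonneg (norm_circleMap_zero_lt_one hr θ) t)]
  have hmeas : Measurable (Function.uncurry fun θ t =>
      ENNReal.ofReal (cauchyKer (circleMap 0 r θ) t).re) :=
    (Complex.continuous_re.comp (continuous_cauchyKer_circleMap hr)).measurable.ennreal_ofReal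
  rw [eLpNorm_eq_lintegral_rpow_enorm_toReal (by simpa) ENNReal.ofReal_ne_top,
    eLpNorm_eq_lintegral_rpow_enorm_toReal (by simpa) ENNReal.ofReal_ne_top,
    ENNReal.toReal_ofReal hp0.le]
  refine ENNReal.rpow_le_rpow ?_ (by positivity)
  exact (lintegral_mono fun θ => ENNReal.rpow_le_rpow (hbound θ) hp0.le).trans <|
    lintegral_rpow_lintegral_mul_le hp hmeas
      (fun θ => (lintegral_re_cauchyKer_circleMap_right hr θ).le)
      (fun t => (lintegral_re_cauchyKer_circleMap_left hr t).le) hφ.aestronglyMeasurable.enorm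

lemma lpNorm_re_cauchyTransform_circleMap_le (hp : 1 ≤ p) (hr : |r| < 1) {φ : ℝ → ℝ}
    (hφ : MemLp φ (ENNReal.ofReal p) angleMeasure) :
    lpNorm (fun θ => (cauchyTransform (fun t => (φ t : ℂ)) (circleMap 0 r θ)).re)
        (ENNReal.ofReal p) angleMeasure
      ≤ lpNorm φ (ENNReal.ofReal p) angleMeasure := by
  have hint : Integrable φ angleMeasure := hφ.integrable (ENNReal.one_le_ofReal.2 hp)
  have hmeas := (memLp_cauchyTransform_circleMap hint.ofReal hr (ENNReal.ofReal p)).re.1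
  rw [← toReal_eLpNorm hφ.1]
  exact (toReal_eLpNorm hmeas).symm.trans_le <|
    ENNReal.toReal_mono hφ.2.ne (eLpNorm_re_cauchyTransform_circleMap_le hp hr hint)

end RealPart

section RieszInequality

variable {p r : ℝ}

lemma integral_div_two_le_re_cauchyTransform {φ : ℝ → ℝ} (hφ0 : 0 ≤ φ)
    (hφ : Integrable φ angleMeasure) {z : ℂ} (hz : ‖z‖ < 1) :
    (∫ t, φ t ∂angleMeasure) / 2 ≤ (cauchyTransform (fun t => (φ t : ℂ)) z).re := by
  have hint : Integrable (fun t => φ t * (cauchyKer z t).re) angleMeasure := by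
    simpa only [Complex.reCLM_apply, Complex.coe_algebraMap, Complex.re_ofReal_mul] using
      Complex.reCLM.integrable_comp (integrable_mul_cauchyKer hφ.ofReal hz)
  rw [re_cauchyTransform_ofReal hφ hz, div_eq_mul_one_div, ← integral_mul_const]
  exact integral_mono (hφ.mul_const _) hint fun t =>
    mul_le_mul_of_nonneg_left (one_half_le_re_cauchyKer hz t) (hφ0 t)

lemma cauchyTransform_apply_zero (φ : ℝ → ℂ) : cauchyTransform φ 0 = ∫ t, φ t ∂angleMeasure := by
  simp only [cauchyTransform, cauchyKer, zero_mul, sub_zero, inv_one, mul_one]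

lemma exists_lpNorm_comp_circleMap_le_lpNorm_re (hp : 1 < p) (hp2 : p ≤ 2) :
    ∃ A : ℝ, 0 < A ∧ ∀ g : ℂ → ℂ, DifferentiableOn ℂ g (ball 0 1) →
      (∀ z ∈ ball (0 : ℂ) 1, 0 < (g z).re) → (g 0).im = 0 → ∀ r : ℝ, |r| < 1 →
      lpNorm (fun θ => g (circleMap 0 r θ)) (ENNReal.ofReal p) angleMeasure
        ≤ A * lpNorm (fun θ => (g (circleMap 0 r θ)).re) (ENNReal.ofReal p) angleMeasure := by
  obtain ⟨A, hA, hmean⟩ := exists_circleAverage_norm_rpow_le hp hp2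
  have hA0 : 0 < A ^ p⁻¹ := Real.rpow_pos_of_pos hA _
  refine ⟨A ^ p⁻¹, hA0, fun g hg hpos him r hr => ?_⟩
  have hp0 : 0 < p := zero_lt_one.trans hp
  have hsub : closedBall (0 : ℂ) |r| ⊆ ball 0 1 := closedBall_subset_ball hr
  have hcont : Continuous fun θ => g (circleMap 0 r θ) :=
    continuous_comp_circleMap hg.continuousOn hr
  have hcont_re : Continuous fun θ => (g (circleMap 0 r θ)).re := Complex.continuous_re.comp hcont
  have hre (θ : ℝ) : ‖(g (circleMap 0 r θ)).re‖ = (g (circleMap 0 r θ)).re :=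
    Real.norm_of_nonneg (hpos _ (mem_ball_zero_iff.2 (norm_circleMap_zero_lt_one hr θ))).le
  rw [← Real.rpow_le_rpow_iff lpNorm_nonneg (mul_nonneg hA0.le lpNorm_nonneg) hp0,
    Real.mul_rpow hA0.le lpNorm_nonneg, Real.rpow_inv_rpow hA.le hp0.ne',
    lpNorm_rpow_eq_integral hp0 hcont.aestronglyMeasurable,
    lpNorm_rpow_eq_integral hp0 hcont_re.aestronglyMeasurable]
  simp only [hre]
  rw [integral_comp_circleMap fun z => ‖g z‖ ^ p, integral_comp_circleMap fun z => (g z).re ^ p]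
  exact hmean g 0 r (hg.mono hsub) (fun z hz => hpos z (hsub hz)) him

lemma exists_lpNorm_cauchyTransform_le_of_nonneg (hp : 1 < p) (hp2 : p ≤ 2) :
    ∃ A : ℝ, 0 < A ∧ ∀ φ : ℝ → ℝ, 0 ≤ φ → MemLp φ (ENNReal.ofReal p) angleMeasure →
      ∀ r : ℝ, |r| < 1 →
      lpNorm (fun θ => cauchyTransform (fun t => (φ t : ℂ)) (circleMap 0 r θ))
        (ENNReal.ofReal p) angleMeasure ≤ A * lpNorm φ (ENNReal.ofReal p) angleMeasure := by
  obtain ⟨A, hA, hre⟩ := exists_lpNorm_comp_circleMap_le_lpNorm_re hp hp2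
  refine ⟨A, hA, fun φ hφ0 hφ r hr => ?_⟩
  have hint : Integrable φ angleMeasure := hφ.integrable (ENNReal.one_le_ofReal.2 hp.le)
  rcases (integral_nonneg hφ0).eq_or_lt with hmean | hmean
  · have hzero : φ =ᵐ[angleMeasure] 0 := (integral_eq_zero_iff_of_nonneg hφ0 hint).1 hmean.symm
    have hC (z : ℂ) : cauchyTransform (fun t => (φ t : ℂ)) z = 0 :=
      integral_eq_zero_of_ae <| hzero.mono fun t ht => by simp [ht]
    simp only [hC, lpNorm_fun_zero]
    exact mul_nonneg hA.le lpNorm_nonneg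
  · refine (hre _ (differentiableOn_cauchyTransform hint.ofReal) (fun z hz => ?_) ?_ r hr).trans
      (mul_le_mul_of_nonneg_left ?_ hA.le)
    · exact (half_pos hmean).trans_le
        (integral_div_two_le_re_cauchyTransform hφ0 hint (mem_ball_zero_iff.1 hz))
    · rw [cauchyTransform_apply_zero]
      exact (congrArg Complex.im integral_complex_ofReal).trans (Complex.ofReal_im _)
    · exact lpNorm_re_cauchyTransform_circleMap_le hp.le hr hφ

lemma lpNorm_cauchyTransform_add_const_mul_le {p : ℝ≥0∞} {φ ψ : ℝ → ℂ} (hp : 1 ≤ p)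
    (hφ : Integrable φ angleMeasure) (hψ : Integrable ψ angleMeasure) (c : ℂ) (hr : |r| < 1) :
    lpNorm (fun θ => cauchyTransform (fun t => φ t + c * ψ t) (circleMap 0 r θ)) p angleMeasure
      ≤ lpNorm (fun θ => cauchyTransform φ (circleMap 0 r θ)) p angleMeasure
        + ‖c‖ * lpNorm (fun θ => cauchyTransform ψ (circleMap 0 r θ)) p angleMeasure := by
  simp only [cauchyTransform_add hφ (hψ.const_mul c) (norm_circleMap_zero_lt_one hr _),
    cauchyTransform_const_mul]
  refine (lpNorm_add_le (memLp_cauchyTransform_circleMap hφ hr p) hp).trans_eq ?_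
  congr 1
  exact lpNorm_const_smul c (fun θ => cauchyTransform ψ (circleMap 0 r θ)) _

lemma exists_lpNorm_cauchyTransform_ofReal_le (hp : 1 < p) (hp2 : p ≤ 2) :
    ∃ A : ℝ, 0 < A ∧ ∀ φ : ℝ → ℝ, MemLp φ (ENNReal.ofReal p) angleMeasure → ∀ r : ℝ, |r| < 1 →
      lpNorm (fun θ => cauchyTransform (fun t => (φ t : ℂ)) (circleMap 0 r θ))
        (ENNReal.ofReal p) angleMeasure ≤ A * lpNorm φ (ENNReal.ofReal p) angleMeasure := by
  obtain ⟨A, hA, hnonneg⟩ := exists_lpNorm_cauchyTransform_le_of_nonneg hp hp2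
  refine ⟨2 * A, by positivity, fun φ hφ r hr => ?_⟩
  have hp1 : 1 ≤ ENNReal.ofReal p := ENNReal.one_le_ofReal.2 hp.le
  have hsplit : (fun t => (((φ t)⁺ : ℝ) : ℂ) + (-1) * ((φ t)⁻ : ℝ)) = fun t => (φ t : ℂ) := by
    funext t
    rw [neg_one_mul, ← sub_eq_add_neg, ← Complex.ofReal_sub, posPart_sub_negPart]
  have hadd := lpNorm_cauchyTransform_add_const_mul_le (φ := fun t => (((φ t)⁺ : ℝ) : ℂ))
    (ψ := fun t => (((φ t)⁻ : ℝ) : ℂ)) hp1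
    (hφ.pos_part.integrable hp1).ofReal (hφ.neg_part.integrable hp1).ofReal (-1) hr
  rw [hsplit, norm_neg, norm_one, one_mul] at hadd
  calc lpNorm (fun θ => cauchyTransform (fun t => (φ t : ℂ)) (circleMap 0 r θ))
        (ENNReal.ofReal p) angleMeasure
      ≤ A * lpNorm (fun t => (φ t)⁺) (ENNReal.ofReal p) angleMeasure
        + A * lpNorm (fun t => (φ t)⁻) (ENNReal.ofReal p) angleMeasure :=
      hadd.trans (add_le_add (hnonneg _ (fun t => posPart_nonneg _) hφ.pos_part r hr)
        (hnonneg _ (fun t => negPart_nonneg _) hφ.neg_part r hr))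
    _ ≤ A * lpNorm φ (ENNReal.ofReal p) angleMeasure
        + A * lpNorm φ (ENNReal.ofReal p) angleMeasure := by
      gcongr <;> refine lpNorm_le_lpNorm_of_norm_le hφ fun t => ?_
      · exact (Real.norm_of_nonneg (posPart_nonneg _)).trans_le
          (max_le (le_abs_self _) (abs_nonneg _))
      · exact (Real.norm_of_nonneg (negPart_nonneg _)).trans_le
          (max_le (neg_le_abs _) (abs_nonneg _))
    _ = _ := by ring

end RieszInequality

/-- `A` bounds the norm of the Cauchy transform as an operator from `L^p(𝕋)` to `H^p(𝔻)`, that is,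
the `L^p` operator norms of `φ ↦ (cauchyTransform φ) (r e^{iθ})` uniformly in `|r| < 1`. -/
def CauchyTransformBound (p A : ℝ) : Prop :=
  ∀ ⦃φ : ℝ → ℂ⦄, MemLp φ (ENNReal.ofReal p) angleMeasure → ∀ ⦃r : ℝ⦄, |r| < 1 →
    lpNorm (fun θ => cauchyTransform φ (circleMap 0 r θ)) (ENNReal.ofReal p) angleMeasure
      ≤ A * lpNorm φ (ENNReal.ofReal p) angleMeasure

section CauchyTransformBound

variable {p q A : ℝ}

lemma exists_cauchyTransformBound_of_le_two (hp : 1 < p) (hp2 : p ≤ 2) :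
    ∃ A : ℝ, 0 < A ∧ CauchyTransformBound p A := by
  obtain ⟨A, hA, hreal⟩ := exists_lpNorm_cauchyTransform_ofReal_le hp hp2
  refine ⟨2 * A, by positivity, fun φ hφ r hr => ?_⟩
  have hp1 : 1 ≤ ENNReal.ofReal p := ENNReal.one_le_ofReal.2 hp.le
  have hsplit : (fun t => ((φ t).re : ℂ) + Complex.I * ((φ t).im : ℂ)) = φ := by
    funext t
    rw [mul_comm, Complex.re_add_im]
  have hadd := lpNorm_cauchyTransform_add_const_mul_le (φ := fun t => ((φ t).re : ℂ))
    (ψ := fun t => ((φ t).im : ℂ)) hp1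
    (hφ.re.integrable hp1).ofReal (hφ.im.integrable hp1).ofReal Complex.I hr
  rw [hsplit, Complex.norm_I, one_mul] at hadd
  calc lpNorm (fun θ => cauchyTransform φ (circleMap 0 r θ)) (ENNReal.ofReal p) angleMeasure
      ≤ A * lpNorm (fun t => (φ t).re) (ENNReal.ofReal p) angleMeasure
        + A * lpNorm (fun t => (φ t).im) (ENNReal.ofReal p) angleMeasure :=
      hadd.trans (add_le_add (hreal _ hφ.re r hr) (hreal _ hφ.im r hr))
    _ ≤ A * lpNorm φ (ENNReal.ofReal p) angleMeasure
        + A * lpNorm φ (ENNReal.ofReal p) angleMeasure := by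
      gcongr <;> refine lpNorm_le_lpNorm_of_norm_le hφ fun t => ?_
      · exact Complex.abs_re_le_norm _
      · exact Complex.abs_im_le_norm _
    _ = _ := by ring

lemma CauchyTransformBound.of_holderConjugate (hpq : p.HolderConjugate q) (hA : 0 ≤ A)
    (hbound : CauchyTransformBound p A) : CauchyTransformBound q A := by
  intro φ hφ r hr
  have hφ_int := hφ.integrable (ENNReal.one_le_ofReal.2 hpq.symm.lt.le)
  refine lpNorm_le_of_forall_norm_integral_mul_conj_le hpq.symm (mul_nonneg hA lpNorm_nonneg)
    (memLp_cauchyTransform_circleMap hφ_int hr _) fun η hη => ?_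
  have hη_int := hη.integrable (ENNReal.one_le_ofReal.2 hpq.lt.le)
  rw [integral_mul_conj_cauchyTransform hφ_int hη_int hr]
  calc _ ≤ lpNorm φ (ENNReal.ofReal q) angleMeasure *
        lpNorm (fun t => cauchyTransform η (circleMap 0 r t)) (ENNReal.ofReal p) angleMeasure :=
        norm_integral_mul_conj_le_lpNorm_mul_lpNorm hpq.symm hφ
          (memLp_cauchyTransform_circleMap hη_int hr _)
    _ ≤ lpNorm φ (ENNReal.ofReal q) angleMeasure *
        (A * lpNorm η (ENNReal.ofReal p) angleMeasure) :=
        mul_le_mul_of_nonneg_left (hbound hη hr) lpNorm_nonneg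
    _ = _ := by ring

lemma exists_cauchyTransformBound (hp : 1 < p) : ∃ A : ℝ, 0 < A ∧ CauchyTransformBound p A := by
  rcases le_total p 2 with hp2 | hp2
  · exact exists_cauchyTransformBound_of_le_two hp hp2
  · have hpq := Real.HolderConjugate.conjExponent hp
    have hq2 : p.conjExponent ≤ 2 := by
      rw [Real.conjExponent, div_le_iff₀ (sub_pos.2 hp)]
      linarith
    obtain ⟨A, hA, hbound⟩ := exists_cauchyTransformBound_of_le_two hpq.symm.lt hq2
    exact ⟨A, hA, hbound.of_holderConjugate hpq.symm hA.le⟩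

end CauchyTransformBound

lemma integral_add_primitive_mul_deriv_of_periodic {f h h' : ℝ → ℂ}
    (hf : Integrable f angleMeasure) (hf0 : ∫ t, f t ∂angleMeasure = 0)
    (hper : Function.Periodic h (2 * π)) (hh : ∀ t, HasDerivAt h (h' t) t)
    (hh' : Integrable h' angleMeasure) (c : ℂ) :
    ∫ t, (c + ∫ s in (0 : ℝ)..t, f s) * h' t ∂angleMeasure = -∫ t, f t * h t ∂angleMeasure := by
  rw [← intervalIntegrable_zero_two_pi_iff] at hf hh'
  have hprim : ContinuousOn (fun t => ∫ s in (0 : ℝ)..t, f s) (uIcc 0 (2 * π)) :=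
    intervalIntegral.continuousOn_primitive_interval' hf left_mem_uIcc
  have hf0' : ∫ t in (0 : ℝ)..2 * π, f t = 0 := by
    simpa [integral_angleMeasure, Real.pi_ne_zero] using hf0
  have hh0 : ∫ t in (0 : ℝ)..2 * π, h' t = 0 := by
    rw [intervalIntegral.integral_eq_sub_of_hasDerivAt (fun t _ => hh t) hh', hper.eq, sub_self]
  simp only [integral_angleMeasure, add_mul]
  rw [intervalIntegral.integral_add (hh'.const_mul c) (hh'.continuousOn_mul hprim),
    intervalIntegral.integral_const_mul, hh0,
    integral_primitive_mul_deriv Real.two_pi_pos.le hf (fun t _ => hh t) hh', hf0']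
  simp only [mul_zero, zero_mul, zero_add, zero_sub, smul_neg]

lemma integral_primitive_mul_exp_mul_cauchyKer_sq {f : ℝ → ℂ} (hf : Integrable f angleMeasure)
    (hf0 : ∫ t, f t ∂angleMeasure = 0) (c : ℂ) {z : ℂ} (hz : ‖z‖ < 1) :
    ∫ t, (c + ∫ s in (0 : ℝ)..t, f s) *
        (Complex.exp (-(t : ℂ) * Complex.I) * cauchyKer z t ^ 2) ∂angleMeasure
      = -Complex.I * cauchyTransform (fun t => f t * Complex.exp (-(t : ℂ) * Complex.I)) z := by
  have hper : Function.Periodic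
      (fun t : ℝ => Complex.exp (-(t : ℂ) * Complex.I) * cauchyKer z t) (2 * π) := fun t => by
    have hexp : Complex.exp (-((t + 2 * π : ℝ) : ℂ) * Complex.I)
        = Complex.exp (-(t : ℂ) * Complex.I) := by
      rw [← Complex.exp_periodic.sub_eq (-(t : ℂ) * Complex.I)]
      push_cast
      ring_nf
    simp only [cauchyKer, hexp]
  have hcont : Continuous fun t : ℝ =>
      -Complex.I * (Complex.exp (-(t : ℂ) * Complex.I) * cauchyKer z t ^ 2) :=
    continuous_const.mul (Continuous.mul (by fun_prop) ((continuous_cauchyKer hz).pow 2))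
  have hparts := integral_add_primitive_mul_deriv_of_periodic hf hf0 hper
    (hasDerivAt_exp_mul_cauchyKer hz)
    ((memLp_angleMeasure_of_continuous hcont 1).integrable le_rfl) c
  simp only [mul_left_comm _ (-Complex.I), integral_const_mul] at hparts
  simp only [cauchyTransform, mul_assoc]
  refine mul_left_cancel₀ (neg_ne_zero.2 Complex.I_ne_zero) ?_
  rw [hparts, ← mul_assoc, neg_mul_neg, Complex.I_mul_I, neg_one_mul]

lemma conj_wdzb (f : ℂ → ℂ) (z : ℂ) :
    (starRingEnd ℂ) (wdzb f z) = wdz (fun w => (starRingEnd ℂ) (f w)) z := by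
  have hcomp : fderiv ℝ (fun w => (starRingEnd ℂ) (f w)) z
      = (Complex.conjCLE : ℂ →L[ℝ] ℂ).comp (fderiv ℝ f z) := Complex.conjCLE.comp_fderiv
  simp only [wdz, wdzb, hcomp, ContinuousLinearMap.comp_apply, ContinuousLinearEquiv.coe_coe,
    Complex.conjCLE_apply, map_mul, map_add, map_div₀, map_one, Complex.conj_ofNat, Complex.conj_I,
    neg_mul, sub_eq_add_neg]

lemma wdz_add_conj {h k : ℂ → ℂ} {h' k' z : ℂ} (hh : HasDerivAt h h' z)
    (hk : HasDerivAt k k' z) : wdz (fun w => h w + (starRingEnd ℂ) (k w)) z = h' := by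
  have hderiv := (hh.hasFDerivAt.restrictScalars ℝ).fun_add <|
    Complex.conjCLE.toContinuousLinearMap.hasFDerivAt.comp z (hk.hasFDerivAt.restrictScalars ℝ)
  have hfderiv : fderiv ℝ (fun w => h w + (starRingEnd ℂ) (k w)) z = _ := hderiv.fderiv
  rw [wdz, hfderiv]
  simp only [add_apply, ContinuousLinearMap.comp_apply,
    ContinuousLinearMap.coe_restrictScalars', ContinuousLinearMap.toSpanSingleton_apply,
    ContinuousLinearEquiv.coe_coe, Complex.conjCLE_apply, smul_eq_mul, map_mul, map_one,
    Complex.conj_I]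
  linear_combination (-h' / 2 + (starRingEnd ℂ) k' / 2) * Complex.I_mul_I

section PoissonIntegral

variable {F : ℂ → ℂ} {z : ℂ}

lemma poissonInt_eq_cauchyTransform_add_conj
    (hF : Integrable (fun t : ℝ => F (Complex.exp (t * Complex.I))) angleMeasure) (hz : ‖z‖ < 1) :
    poissonInt F z =
      (cauchyTransform (fun t => F (Complex.exp (t * Complex.I))) z
        - ∫ t : ℝ, F (Complex.exp (t * Complex.I)) ∂angleMeasure)
      + (starRingEnd ℂ)
        (cauchyTransform (fun t => (starRingEnd ℂ) (F (Complex.exp (t * Complex.I)))) z) := by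
  have hKF := integrable_mul_cauchyKer hF hz
  have hKF' : Integrable (fun t : ℝ => F (Complex.exp (t * Complex.I)) *
      (starRingEnd ℂ) (cauchyKer z t)) angleMeasure :=
    hF.mul_bdd (Complex.continuous_conj.comp (continuous_cauchyKer hz)).aestronglyMeasurable <|
      Eventually.of_forall fun t => by
        simpa only [Function.comp, RCLike.norm_conj] using norm_cauchyKer_le hz le_rfl t
  have hmean : poissonInt F z = ∫ t : ℝ,
      (poissonKer (z * Complex.exp (-(t : ℂ) * Complex.I)) : ℂ) *
        F (Complex.exp (t * Complex.I)) ∂angleMeasure := by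
    rw [integral_angleMeasure, poissonInt, Complex.real_smul]
    push_cast
    rw [one_div]
  rw [hmean]
  simp only [cauchyTransform, ← integral_conj, map_mul, Complex.conj_conj]
  rw [← integral_sub hKF hF, ← integral_add (f := fun t : ℝ => _ - _) (hKF.sub hF) hKF']
  refine integral_congr_ae (Eventually.of_forall fun t => ?_)
  simp only [poissonKer_mul_exp hz]
  ring

lemma wdz_poissonInt
    (hF : Integrable (fun t : ℝ => F (Complex.exp (t * Complex.I))) angleMeasure) (hz : ‖z‖ < 1) :
    wdz (poissonInt F) z = ∫ t : ℝ, F (Complex.exp (t * Complex.I)) *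
      (Complex.exp (-(t : ℂ) * Complex.I) * cauchyKer z t ^ 2) ∂angleMeasure := by
  have hF' : Integrable (fun t : ℝ => (starRingEnd ℂ) (F (Complex.exp (t * Complex.I))))
      angleMeasure := Complex.conjCLE.toContinuousLinearMap.integrable_comp hF
  have hdisk : ∀ᶠ w in 𝓝 z, ‖w‖ < 1 := continuous_norm.continuousAt.eventually_lt_const hz
  have heq := EventuallyEq.fderiv_eq (𝕜 := ℝ) <|
    hdisk.mono fun w => poissonInt_eq_cauchyTransform_add_conj hF
  rw [wdz, heq]
  exact wdz_add_conj ((hasDerivAt_cauchyTransform hF hz).sub_const _)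
    (hasDerivAt_cauchyTransform hF' hz)

lemma conj_poissonInt (F : ℂ → ℂ) (z : ℂ) :
    (starRingEnd ℂ) (poissonInt F z) = poissonInt (fun w => (starRingEnd ℂ) (F w)) z := by
  simp only [poissonInt, ← intervalIntegral.intervalIntegral_conj, map_mul, map_div₀, map_one,
    Complex.conj_ofNat, Complex.conj_ofReal]

end PoissonIntegral

section IsACDeriv

variable {F : ℂ → ℂ} {Fd : ℝ → ℂ}

lemma IsACDeriv.conj (hF : IsACDeriv F Fd) :
    IsACDeriv (fun w => (starRingEnd ℂ) (F w)) fun t => (starRingEnd ℂ) (Fd t) := by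
  obtain ⟨hint, hper, hprim⟩ := hF
  refine ⟨fun a b => ?_, hper.comp _, fun t => ?_⟩
  · exact intervalIntegrable_iff.2 <| Complex.conjCLE.toContinuousLinearMap.integrable_comp
      (intervalIntegrable_iff.1 (hint a b))
  · simp only [intervalIntegral.intervalIntegral_conj, hprim t, map_add]

lemma IsACDeriv.integrable (hF : IsACDeriv F Fd) : Integrable Fd angleMeasure :=
  intervalIntegrable_zero_two_pi_iff.1 (hF.1 0 (2 * π))

lemma IsACDeriv.integral_eq_zero (hF : IsACDeriv F Fd) : ∫ t, Fd t ∂angleMeasure = 0 := by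
  have hprim := hF.2.2 (2 * π)
  push_cast at hprim
  rw [Complex.exp_two_pi_mul_I, left_eq_add] at hprim
  rw [integral_angleMeasure, hprim, smul_zero]

lemma IsACDeriv.integrable_boundary (hF : IsACDeriv F Fd) :
    Integrable (fun t : ℝ => F (Complex.exp (t * Complex.I))) angleMeasure := by
  simp only [hF.2.2]
  exact (memLp_angleMeasure_of_continuous
    (continuous_const.add (intervalIntegral.continuous_primitive hF.1 0)) 1).integrable le_rfl

lemma IsACDeriv.wdz_poissonInt (hF : IsACDeriv F Fd) {z : ℂ} (hz : ‖z‖ < 1) :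
    wdz (poissonInt F) z =
      -Complex.I * cauchyTransform (fun t => Fd t * Complex.exp (-(t : ℂ) * Complex.I)) z := by
  rw [_root_.wdz_poissonInt hF.integrable_boundary hz]
  simp only [hF.2.2]
  exact integral_primitive_mul_exp_mul_cauchyKer_sq hF.integrable hF.integral_eq_zero _ hz

end IsACDeriv

section WirtingerDerivative

variable {F : ℂ → ℂ} {Fd : ℝ → ℂ} {p A r : ℝ}

lemma IsACDeriv.differentiableOn_wdz_poissonInt (hF : IsACDeriv F Fd) :
    DifferentiableOn ℂ (wdz (poissonInt F)) (ball 0 1) := by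
  have hint : Integrable (fun t => Fd t * Complex.exp (-(t : ℂ) * Complex.I)) angleMeasure :=
    hF.integrable.mul_bdd (c := 1) (by fun_prop)
      (Eventually.of_forall fun t => (norm_exp_neg_ofReal_mul_I t).le)
  exact ((differentiableOn_cauchyTransform hint).const_mul (-Complex.I)).congr fun z hz =>
    hF.wdz_poissonInt (mem_ball_zero_iff.1 hz)

lemma IsACDeriv.Mp_wdz_poissonInt_le (hF : IsACDeriv F Fd) (hFd : MemLpT (ENNReal.ofReal p) Fd)
    (hp : 0 < p) (hA : 0 ≤ A) (hbound : CauchyTransformBound p A) (hr : |r| < 1) :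
    Mp p (wdz (poissonInt F)) r ≤ A * lpNormT p Fd := by
  set φ : ℝ → ℂ := fun t => Fd t * Complex.exp (-(t : ℂ) * Complex.I)
  have hφ_norm (t : ℝ) : ‖φ t‖ = ‖Fd t‖ := by
    rw [norm_mul, norm_exp_neg_ofReal_mul_I, mul_one]
  have hFd' := hFd.memLp_angleMeasure
  have hφ : MemLp φ (ENNReal.ofReal p) angleMeasure :=
    hFd'.congr_norm (hFd'.1.mul (by fun_prop)) (Eventually.of_forall fun t => (hφ_norm t).symm)
  have hφ_int : Integrable φ angleMeasure :=
    hF.integrable.congr' hφ.1 (Eventually.of_forall fun t => (hφ_norm t).symm)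
  have hwdz (θ : ℝ) : ‖wdz (poissonInt F) (circleMap 0 r θ)‖
      = ‖cauchyTransform φ (circleMap 0 r θ)‖ := by
    rw [hF.wdz_poissonInt (norm_circleMap_zero_lt_one hr θ), norm_mul, norm_neg, Complex.norm_I,
      one_mul]
  have hmeas : AEStronglyMeasurable (fun θ => wdz (poissonInt F) (circleMap 0 r θ)) angleMeasure :=
    (continuous_comp_circleMap hF.differentiableOn_wdz_poissonInt.continuousOn
      hr).aestronglyMeasurable
  rw [Mp_eq_lpNormT, lpNormT_eq_lpNorm hp hmeas, lpNormT_eq_lpNorm hp hFd'.1]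
  calc _ ≤ lpNorm (fun θ => cauchyTransform φ (circleMap 0 r θ)) (ENNReal.ofReal p) angleMeasure :=
        lpNorm_le_lpNorm_of_norm_le (memLp_cauchyTransform_circleMap hφ_int hr _)
          fun θ => (hwdz θ).le
    _ ≤ A * lpNorm φ (ENNReal.ofReal p) angleMeasure := hbound hφ hr
    _ ≤ _ := mul_le_mul_of_nonneg_left
        (lpNorm_le_lpNorm_of_norm_le hFd' fun t => (hφ_norm t).le) hA

lemma lpNormT_conj (p : ℝ) (φ : ℝ → ℂ) :
    lpNormT p (fun t => (starRingEnd ℂ) (φ t)) = lpNormT p φ := by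
  simp only [lpNormT, RCLike.norm_conj]

lemma MemLpT.conj {p : ℝ≥0∞} {φ : ℝ → ℂ} (hφ : MemLpT p φ) :
    MemLpT p fun t => (starRingEnd ℂ) (φ t) :=
  MemLp.star hφ

end WirtingerDerivative

/-- For `p ∈ (1,∞)` there is a constant `A_p` such that for every
absolutely continuous `F : 𝕋 → ℂ` with `Ḟ ∈ L^p(𝕋)` and `f = P[F]`, both `f_z` and
`conj (f_z̄)` lie in `H^p(𝔻)` with `max(‖f_z‖_p, ‖conj (f_z̄)‖_p) ≤ A_p ‖Ḟ‖_{L^p}`. -/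
theorem stmt0 (p : ℝ) (hp : 1 < p) :
    ∃ A : ℝ, 0 < A ∧ ∀ (F : ℂ → ℂ) (Fd : ℝ → ℂ),
      IsACDeriv F Fd →
      MemLpT (ENNReal.ofReal p) Fd →
      MemHp p (wdz (poissonInt F)) ∧
      MemHp p (fun z => (starRingEnd ℂ) (wdzb (poissonInt F) z)) ∧
      ∀ r ∈ Ioo (0:ℝ) 1,
        max (Mp p (wdz (poissonInt F)) r)
            (Mp p (fun z => (starRingEnd ℂ) (wdzb (poissonInt F) z)) r)
          ≤ A * lpNormT p Fd := by
  obtain ⟨A, hA, hbound⟩ := exists_cauchyTransformBound hp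
  have hwdz (F : ℂ → ℂ) (Fd : ℝ → ℂ) (hF : IsACDeriv F Fd) (hFd : MemLpT (ENNReal.ofReal p) Fd) :
      ∀ r ∈ Ioo (0 : ℝ) 1, Mp p (wdz (poissonInt F)) r ≤ A * lpNormT p Fd := fun r hr =>
    hF.Mp_wdz_poissonInt_le hFd (zero_lt_one.trans hp) hA.le hbound
      (abs_lt.2 ⟨neg_one_lt_zero.trans hr.1, hr.2⟩)
  refine ⟨A, hA, fun F Fd hF hFd => ?_⟩
  have hle := hwdz F Fd hF hFd
  have hle_conj := hwdz _ _ hF.conj hFd.conj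
  rw [lpNormT_conj] at hle_conj
  simp only [conj_wdzb, conj_poissonInt]
  exact ⟨⟨hF.differentiableOn_wdz_poissonInt, _, hle⟩,
    ⟨hF.conj.differentiableOn_wdz_poissonInt, _, hle_conj⟩,
    fun r hr => max_le (hle r hr) (hle_conj r hr)⟩

end
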